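/- Let G be a task graph with present bias β ∈ (0,1] and let ϱ = min over directed s–t paths P of max{η_0̃(e) : e an edge of P}. If a cost configuration c̃ is motivating for a reward r, then r ≥ ϱ/β. -/

import Mathlib

/-!
Extra costs can only increase distances to `t`, hence perceived costs (`etaCost_mono`).
So on any edge `(v, w)` that the agent takes in the modified graph, the original perceived
cost is at most the modified one, which equals the modified `ζ(v) ≤ β r`. Since the graph is a
finite DAG, a motivated agent eventually arrives at `t` (`good_walk_or_long`), and her walk is an
`s`–`t` path all of whose original perceived edge costs are at most `β r`; therefore `ϱ ≤ β r`.
-/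

/-!
Framework: task graphs, present-biased agents, perceived costs, greedy walks,
motivating rewards, cost configurations and subgraphs
(Kleinberg–Oren model, following Albers–Kraft).
-/

variable {V : Type} [Fintype V] [DecidableEq V]

/-- The list of (directed) edges traversed by a walk given as a list of vertices. -/
def walkEdges (p : List V) : List (V × V) := p.zip p.tail

/-- `p` is a walk in the edge set `E`: consecutive vertices are joined by edges. -/
def IsWalk (E : Finset (V × V)) (p : List V) : Prop :=
  List.Chain' (fun u v : V => (u, v) ∈ E) p

/-- `p` is a walk in `E` from `a` to `b`. -/
def IsWalkFrom (E : Finset (V × V)) (p : List V) (a b : V) : Prop :=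
  IsWalk E p ∧ p.head? = some a ∧ p.getLast? = some b

/-- There is a walk in `E` from `a` to `b`. -/
def Reaches (E : Finset (V × V)) (a b : V) : Prop :=
  ∃ p : List V, IsWalkFrom E p a b

/-- Total cost of a walk. -/
noncomputable def walkCost (c : V × V → ℝ) (p : List V) : ℝ :=
  ((walkEdges p).map c).sum

/-- A task graph: a finite DAG with source `s`, target `t`, nonnegative edge
costs, in which every node lies on some directed path from `s` to `t`. -/
structure TaskGraph (V : Type) [Fintype V] [DecidableEq V] where
  E : Finset (V × V)
  s : V
  t : V
  c : V × V → ℝ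
  c_nonneg : ∀ e ∈ E, 0 ≤ c e
  acyclic : ∀ p : List V, IsWalk E p → p.Nodup
  onPath : ∀ v : V, ∃ p : List V, IsWalkFrom E p s t ∧ v ∈ p

/-- `dcost E c t v` : cost of a cheapest walk from `v` to `t` in `E` w.r.t. costs `c`. -/
noncomputable def dcost (E : Finset (V × V)) (c : V × V → ℝ) (t v : V) : ℝ :=
  sInf (walkCost c '' {p : List V | IsWalkFrom E p v t})

/-- Perceived cost `η(v,w) = c(v,w) + β d(w)` of an edge for a `β`-present-biased agent. -/
noncomputable def etaCost (E : Finset (V × V)) (c : V × V → ℝ) (t : V) (β : ℝ)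
    (e : V × V) : ℝ :=
  c e + β * dcost E c t e.2

/-- Lowest perceived cost `ζ(v)`: the infimum of `η(v,w)` over edges `(v,w) ∈ E`
whose head `w` admits a continuation to `t` (i.e. over the agent's possible plans). -/
noncomputable def zetaCost (E : Finset (V × V)) (c : V × V → ℝ) (t : V) (β : ℝ)
    (v : V) : ℝ :=
  sInf {x : ℝ | ∃ w : V, (v, w) ∈ E ∧ Reaches E w t ∧ etaCost E c t β (v, w) = x}

/-- One step of the agent's greedy walk for reward `r`: she traverses only
edges realizing the lowest perceived cost, and only if `ζ(v) ≤ β r`. -/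
def GreedyStep (E : Finset (V × V)) (c : V × V → ℝ) (t : V) (β r : ℝ) (v w : V) : Prop :=
  v ≠ t ∧ (v, w) ∈ E ∧ Reaches E w t ∧
    etaCost E c t β (v, w) = zetaCost E c t β v ∧ zetaCost E c t β v ≤ β * r

/-- Nodes the agent may visit on some greedy walk from `s`. -/
inductive AgentReach (E : Finset (V × V)) (c : V × V → ℝ) (s t : V) (β r : ℝ) : V → Prop
  | start : AgentReach E c s t β r s
  | step {v w : V} : AgentReach E c s t β r v → GreedyStep E c t β r v w →
      AgentReach E c s t β r w

/-- The task graph (with edge set `E`, costs `c`) is motivating for reward `r`: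
at every node the agent may reach, she neither abandons nor gets stuck,
i.e. she can always perform a greedy step (hence, the graph being a finite DAG,
she reaches `t` on every greedy walk). -/
def Motivating (E : Finset (V × V)) (c : V × V → ℝ) (s t : V) (β r : ℝ) : Prop :=
  ∀ v : V, AgentReach E c s t β r v → v ≠ t → ∃ w : V, GreedyStep E c t β r v w

/-- A complete greedy walk of the agent from `s` to `t`. -/
def AgentWalk (E : Finset (V × V)) (c : V × V → ℝ) (s t : V) (β r : ℝ) (p : List V) : Prop :=
  IsWalkFrom E p s t ∧ List.Chain' (GreedyStep E c t β r) p

/-- An initial segment of a greedy walk of the agent starting at `s`. -/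
def GreedyPrefix (E : Finset (V × V)) (c : V × V → ℝ) (s t : V) (β r : ℝ) (p : List V) : Prop :=
  p.head? = some s ∧ List.Chain' (GreedyStep E c t β r) p

/-- A cost configuration: nonnegative extra costs on the edges. -/
def CostConfig (c' : V × V → ℝ) : Prop := ∀ e : V × V, 0 ≤ c' e

/-- The modified costs obtained by applying a cost configuration to `G`. -/
noncomputable def addc (G : TaskGraph V) (c' : V × V → ℝ) : V × V → ℝ :=
  fun e => G.c e + c' e

/-- The cost configuration `c'` is motivating for reward `r` on `G`. -/
def MotivatingConfig (G : TaskGraph V) (β r : ℝ) (c' : V × V → ℝ) : Prop :=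
  Motivating G.E (addc G c') G.s G.t β r

/-- The subgraph of `G` with edge set `E'` (retaining an `s`–`t` path) is
motivating for reward `r`; all quantities are computed within the subgraph. -/
def MotivatingSubgraph (G : TaskGraph V) (β r : ℝ) (E' : Finset (V × V)) : Prop :=
  E' ⊆ G.E ∧ (∃ p : List V, IsWalkFrom E' p G.s G.t) ∧ Motivating E' G.c G.s G.t β r

/-- Maximum of `f` over the edges of a walk (`0` if the walk has no edges; all
relevant values are nonnegative). -/
noncomputable def maxEdge (f : V × V → ℝ) (p : List V) : ℝ :=
  ((walkEdges p).map f).foldr max 0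

/-- `ϱ`: the minimum over all `s`–`t` paths `P` of the maximum perceived edge cost
`η_0̃(e)` over the edges `e` of `P`. -/
noncomputable def minmaxRho (G : TaskGraph V) (β : ℝ) : ℝ :=
  sInf ((fun p => maxEdge (etaCost G.E G.c G.t β) p) ''
    {p : List V | IsWalkFrom G.E p G.s G.t})

lemma mem_of_mem_walkEdges {E : Finset (V × V)} :
    ∀ {p : List V}, IsWalk E p → ∀ e ∈ walkEdges p, e ∈ E
  | [], _, e, he => by simp [walkEdges] at he
  | [_], _, e, he => by simp [walkEdges] at he
  | a :: b :: l, hp, e, he => by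
    obtain ⟨hab, hl⟩ := List.isChain_cons_cons.1 hp
    rcases List.mem_cons.1 (show e ∈ (a, b) :: walkEdges (b :: l) from he) with rfl | he
    · exact hab
    · exact mem_of_mem_walkEdges hl e he

lemma IsWalkFrom.cons {E : Finset (V × V)} {v w t : V} {l : List V} (hvw : (v, w) ∈ E)
    (h : IsWalkFrom E (w :: l) w t) : IsWalkFrom E (v :: w :: l) v t :=
  ⟨List.isChain_cons_cons.2 ⟨hvw, h.1⟩, rfl, by simpa using h.2.2⟩

lemma walkCost_nonneg {E : Finset (V × V)} {c : V × V → ℝ} (hc : ∀ e ∈ E, 0 ≤ c e)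
    {p : List V} (hp : IsWalk E p) : 0 ≤ walkCost c p := by
  refine List.sum_nonneg fun x hx => ?_
  obtain ⟨e, he, rfl⟩ := List.mem_map.1 hx
  exact hc e (mem_of_mem_walkEdges hp e he)

lemma dcost_mono {E : Finset (V × V)} {c₁ c₂ : V × V → ℝ} (hc : ∀ e ∈ E, 0 ≤ c₁ e)
    (h : ∀ e, c₁ e ≤ c₂ e) {t v : V} (hv : Reaches E v t) :
    dcost E c₁ t v ≤ dcost E c₂ t v := by
  obtain ⟨q, hq⟩ := hv
  refine le_csInf ⟨_, q, hq, rfl⟩ ?_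
  rintro _ ⟨p, hp, rfl⟩
  have hbdd : BddBelow (walkCost c₁ '' {p : List V | IsWalkFrom E p v t}) := by
    refine ⟨0, ?_⟩
    rintro _ ⟨p, hp, rfl⟩
    exact walkCost_nonneg hc hp.1
  exact (csInf_le hbdd ⟨p, hp, rfl⟩).trans (List.sum_le_sum fun e _ => h e)

lemma etaCost_mono {E : Finset (V × V)} {c₁ c₂ : V × V → ℝ} (hc : ∀ e ∈ E, 0 ≤ c₁ e)
    (h : ∀ e, c₁ e ≤ c₂ e) {t v w : V} {β : ℝ} (hβ : 0 ≤ β) (hw : Reaches E w t) :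
    etaCost E c₁ t β (v, w) ≤ etaCost E c₂ t β (v, w) :=
  add_le_add (h _) (mul_le_mul_of_nonneg_left (dcost_mono hc h hw) hβ)

/-- From a node the agent may visit, her greedy steps either complete a walk to `t` whose original
perceived edge costs are all at most `β r`, or go on for any prescribed number `n` of steps. In a
finite DAG the second alternative fails for large `n`. -/
lemma good_walk_or_long (G : TaskGraph V) {β : ℝ} (hβ : 0 ≤ β) {c' : V × V → ℝ}
    (hc' : CostConfig c') {r : ℝ} (hmot : MotivatingConfig G β r c') (n : ℕ) :
    ∀ v : V, AgentReach G.E (addc G c') G.s G.t β r v →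
      (∃ l : List V, IsWalkFrom G.E (v :: l) v G.t ∧
        ∀ e ∈ walkEdges (v :: l), etaCost G.E G.c G.t β e ≤ β * r) ∨
      ∃ l : List V, IsWalk G.E (v :: l) ∧ l.length = n := by
  induction n with
  | zero => exact fun v _ => Or.inr ⟨[], List.isChain_singleton v, rfl⟩
  | succ n ih =>
    intro v hv
    by_cases hvt : v = G.t
    · exact Or.inl ⟨[], ⟨List.isChain_singleton v, rfl, by simp [hvt]⟩, by simp [walkEdges]⟩
    obtain ⟨w, hw⟩ := hmot v hv hvt
    obtain ⟨-, hvw, hreach, hzeta, hle⟩ := id hw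
    rcases ih w (hv.step hw) with ⟨l, hl, hgood⟩ | ⟨l, hl, hlen⟩
    · refine Or.inl ⟨w :: l, hl.cons hvw, fun e he => ?_⟩
      rcases List.mem_cons.1 (show e ∈ (v, w) :: walkEdges (w :: l) from he) with rfl | he
      · exact (etaCost_mono G.c_nonneg (fun e => le_add_of_nonneg_right (hc' e)) hβ hreach).trans
          (hzeta.trans_le hle)
      · exact hgood e he
    · exact Or.inr ⟨w :: l, List.isChain_cons_cons.2 ⟨hvw, hl⟩, by simp [hlen]⟩

lemma maxEdge_nonneg (f : V × V → ℝ) (p : List V) : 0 ≤ maxEdge f p := by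
  unfold maxEdge
  induction (walkEdges p).map f with
  | nil => exact le_rfl
  | cons a l ih => exact ih.trans (le_max_right _ _)

lemma maxEdge_le {f : V × V → ℝ} {p : List V} {M : ℝ} (hM : 0 ≤ M)
    (h : ∀ e ∈ walkEdges p, f e ≤ M) : maxEdge f p ≤ M := by
  unfold maxEdge
  generalize walkEdges p = l at h
  induction l with
  | nil => exact hM
  | cons a l ih =>
    exact max_le (h a (by simp)) (ih fun e he => h e (List.mem_cons_of_mem _ he))

/-- If a cost configuration is motivating for a reward `r`, then
`r ≥ ϱ/β`, where `ϱ` is the minmax perceived edge cost over `s`–`t` paths. -/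
theorem stmt_9 (G : TaskGraph V) (β : ℝ) (hβ0 : 0 < β) (hβ1 : β ≤ 1)
    (c' : V × V → ℝ) (hc' : CostConfig c') (r : ℝ) (hr : 0 < r)
    (hmot : MotivatingConfig G β r c') :
    minmaxRho G β / β ≤ r := by
  have hβr : 0 ≤ β * r := (mul_pos hβ0 hr).le
  rw [div_le_iff₀ hβ0, mul_comm r β]
  rcases good_walk_or_long G hβ0.le hc' hmot (Fintype.card V) G.s .start with
    ⟨l, hl, hgood⟩ | ⟨l, hl, hlen⟩
  · have hbdd : BddBelow ((fun p => maxEdge (etaCost G.E G.c G.t β) p) ''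
        {p : List V | IsWalkFrom G.E p G.s G.t}) := by
      refine ⟨0, ?_⟩
      rintro _ ⟨p, -, rfl⟩
      exact maxEdge_nonneg _ p
    exact (csInf_le hbdd ⟨G.s :: l, hl, rfl⟩).trans (maxEdge_le hβr hgood)
  · -- A walk in the DAG repeats no vertex, so it cannot have `card V + 1` of them.
    have hcard := (G.acyclic _ hl).length_le_card
    simp [hlen] at hcard
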